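/- arXiv:2311.18205 — 5 statements merged into one kernel-verified Lean document; each statement's English description precedes it below -/
import Mathlib

section
/- Let Ω ⊆ ℝ^N be open, let q ≥ p ≥ 2 be reals, and let u, v : Ω → ℝ be C² functions with u > 0 and v > 0 on Ω that satisfy −Δu + u = v^{p−1} and −Δv + v = u^{q−1} pointwise on Ω. Set l = p/q ∈ (0,1], τ = l^{−1/q}, and w = u − τ·v^l. Then at every point x ∈ Ω at which w(x) ≥ 0, one has Δw(x) ≥ w(x). -/
open Set

/-- The Laplacian of `f : ℝ^N → ℝ` at `x`: the sum of the second partial derivatives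
in the coordinate directions. -/
noncomputable def lap {N : ℕ} (f : EuclideanSpace ℝ (Fin N) → ℝ)
    (x : EuclideanSpace ℝ (Fin N)) : ℝ :=
  ∑ i : Fin N,
    fderiv ℝ (fun y => fderiv ℝ f y (EuclideanSpace.single i 1)) x
      (EuclideanSpace.single i 1)

lemma key_dir {E : Type*} [NormedAddCommGroup E] [NormedSpace ℝ E] (Ω : Set E) (hΩ : IsOpen Ω)
    (u v w : E → ℝ) (hu : ContDiffOn ℝ 2 u Ω) (hv : ContDiffOn ℝ 2 v Ω)
    (hvpos : ∀ x ∈ Ω, 0 < v x) (l τ : ℝ) (hw : ∀ x, w x = u x - τ * v x ^ l)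
    (x : E) (hx : x ∈ Ω) (e : E) :
    fderiv ℝ (fun y => fderiv ℝ w y e) x e =
      fderiv ℝ (fun y => fderiv ℝ u y e) x e
        - τ * (l * v x ^ (l - 1) * fderiv ℝ (fun y => fderiv ℝ v y e) x e
          + l * (l - 1) * v x ^ (l - 1 - 1) * (fderiv ℝ v x e) ^ 2) := by
  have hdiff : ∀ f : E → ℝ, ContDiffOn ℝ 2 f Ω → ∀ y ∈ Ω, HasFDerivAt f (fderiv ℝ f y) y := by
    intro f hf y hy
    exact ((hf.contDiffAt (hΩ.mem_nhds hy)).differentiableAt (by norm_num)).hasFDerivAt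
  have hdiff2 : ∀ f : E → ℝ, ContDiffOn ℝ 2 f Ω →
      DifferentiableAt ℝ (fun y => fderiv ℝ f y e) x := by
    intro f hf
    have h1 : ContDiffAt ℝ 1 (fderiv ℝ f) x :=
      (hf.contDiffAt (hΩ.mem_nhds hx)).fderiv_right (by norm_num)
    exact (h1.differentiableAt (by norm_num)).clm_apply (differentiableAt_const e)
  have hww : w = fun x => u x - τ * v x ^ l := funext hw
  have hev : (fun y => fderiv ℝ w y e) =ᶠ[nhds x]
      fun y => fderiv ℝ u y e - τ * (l * v y ^ (l - 1) * fderiv ℝ v y e) := by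
    filter_upwards [hΩ.mem_nhds hx] with y hy
    have h := (hdiff u hu y hy).sub
      (((hdiff v hv y hy).rpow_const (p := l) (Or.inl (hvpos y hy).ne')).const_mul τ)
    have h' : HasFDerivAt (𝕜 := ℝ) (fun x => u x - τ * v x ^ l) _ y := h
    rw [hww, h'.fderiv]
    simp
  rw [hev.fderiv_eq]
  have hU := (hdiff2 u hu).hasFDerivAt
  have hV := (hdiff2 v hv).hasFDerivAt
  have hR := ((hdiff v hv x hx).rpow_const (p := l - 1) (Or.inl (hvpos x hx).ne')).const_mul l
  have h := hU.sub ((hR.mul hV).const_mul τ)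
  have h' : HasFDerivAt (𝕜 := ℝ)
    (fun y => fderiv ℝ u y e - τ * (l * v y ^ (l - 1) * fderiv ℝ v y e)) _ x := h
  rw [h'.fderiv]
  simp
  ring

/-- for positive `C²` solutions of `−Δu + u = v^(p−1)`, `−Δv + v = u^(q−1)`
on an open set `Ω`, with `l = p/q`, `τ = l^(−1/q)`, `w = u − τ·v^l`, one has
`Δw(x) ≥ w(x)` at every `x ∈ Ω` where `w(x) ≥ 0`. -/
theorem stmt_3 {N : ℕ} (Ω : Set (EuclideanSpace ℝ (Fin N))) (hΩ : IsOpen Ω)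
    (p q : ℝ) (hp : 2 ≤ p) (hpq : p ≤ q)
    (u v : EuclideanSpace ℝ (Fin N) → ℝ)
    (hu : ContDiffOn ℝ 2 u Ω) (hv : ContDiffOn ℝ 2 v Ω)
    (hupos : ∀ x ∈ Ω, 0 < u x) (hvpos : ∀ x ∈ Ω, 0 < v x)
    (heq1 : ∀ x ∈ Ω, -lap u x + u x = v x ^ (p - 1))
    (heq2 : ∀ x ∈ Ω, -lap v x + v x = u x ^ (q - 1))
    (l τ : ℝ) (hl : l = p / q) (hτ : τ = l ^ (-(1 / q)))
    (w : EuclideanSpace ℝ (Fin N) → ℝ)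
    (hw : ∀ x, w x = u x - τ * v x ^ l) :
    ∀ x ∈ Ω, 0 ≤ w x → w x ≤ lap w x := by
  intro x hx hwx
  have hq : 0 < q := by linarith
  have hl0 : 0 < l := by rw [hl]; exact div_pos (by linarith) hq
  have hl1 : l ≤ 1 := by rw [hl, div_le_one hq]; exact hpq
  have hτ0 : 0 < τ := by rw [hτ]; exact Real.rpow_pos_of_pos hl0 _
  have hlq : l * q = p := by rw [hl]; field_simp
  have hτq : τ ^ q = l⁻¹ := by
    rw [hτ, ← Real.rpow_mul hl0.le, ← Real.rpow_neg_one]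
    congr 1
    field_simp
  have hvx := hvpos x hx
  have hux := hupos x hx
  have hlap : lap w x = lap u x - τ * (l * v x ^ (l - 1) * lap v x
      + l * (l - 1) * v x ^ (l - 1 - 1) *
        ∑ i : Fin N, (fderiv ℝ v x (EuclideanSpace.single i 1)) ^ 2) := by
    unfold lap
    rw [Finset.sum_congr rfl (fun i _ =>
      key_dir Ω hΩ u v w hu hv hvpos l τ hw x hx (EuclideanSpace.single i 1))]
    rw [Finset.sum_sub_distrib, ← Finset.mul_sum, Finset.sum_add_distrib, ← Finset.mul_sum,
      ← Finset.mul_sum]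
  have hS : 0 ≤ ∑ i : Fin N, (fderiv ℝ v x (EuclideanSpace.single i 1)) ^ 2 :=
    Finset.sum_nonneg fun i _ => sq_nonneg _
  set S := ∑ i : Fin N, (fderiv ℝ v x (EuclideanSpace.single i 1)) ^ 2
  have hT : 0 ≤ τ * (l * (1 - l) * v x ^ (l - 1 - 1) * S) := by
    have : 0 ≤ 1 - l := by linarith
    positivity
  have e1 : lap u x = u x - v x ^ (p - 1) := by linarith [heq1 x hx]
  have e2 : lap v x = v x - u x ^ (q - 1) := by linarith [heq2 x hx]
  have e3 : v x ^ (l - 1) * v x = v x ^ l := by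
    rw [← Real.rpow_add_one hvx.ne']; congr 1; ring
  have hge : τ * v x ^ l ≤ u x := by linarith [hw x]
  have hpow : (τ * v x ^ l) ^ (q - 1) ≤ u x ^ (q - 1) :=
    Real.rpow_le_rpow (by positivity) hge (by linarith)
  have hmain : v x ^ (p - 1) ≤ τ * l * v x ^ (l - 1) * u x ^ (q - 1) := by
    calc v x ^ (p - 1) = τ * l * v x ^ (l - 1) * (τ * v x ^ l) ^ (q - 1) := by
          rw [Real.mul_rpow hτ0.le (by positivity), ← Real.rpow_mul hvx.le]
          have a1 : τ * τ ^ (q - 1) = l⁻¹ := by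
            rw [← hτq, mul_comm, ← Real.rpow_add_one hτ0.ne']; congr 1; ring
          have a2 : v x ^ (l - 1) * v x ^ (l * (q - 1)) = v x ^ (p - 1) := by
            rw [← Real.rpow_add hvx]; congr 1; linear_combination hlq
          calc v x ^ (p - 1) = (l * l⁻¹) * v x ^ (p - 1) := by
                rw [mul_inv_cancel₀ hl0.ne', one_mul]
            _ = _ := by rw [← a1, ← a2]; ring
      _ ≤ _ := by gcongr
  have hlast : τ * l * v x ^ l ≤ τ * v x ^ l := by
    have : 0 < τ * v x ^ l := by positivity
    nlinarith
  rw [hlap, hw x, e1, e2]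
  have : u x - v x ^ (p - 1) - τ * (l * v x ^ (l - 1) * (v x - u x ^ (q - 1))
      + l * (l - 1) * v x ^ (l - 1 - 1) * S)
      = u x - τ * l * v x ^ l + (τ * l * v x ^ (l - 1) * u x ^ (q - 1) - v x ^ (p - 1))
        + τ * (l * (1 - l) * v x ^ (l - 1 - 1) * S) := by
    rw [← e3]; ring
  rw [this]
  linarith
end

section
/- Let N ≥ 2 be an integer, R > 0, and q ≥ p ≥ 2 reals. Suppose u, v : ℝ^N → ℝ are C² on A_R, continuous on closure(A_R), strictly positive on A_R, vanish on the boundary sphere {|x| = R}, satisfy u(x) → 0 and v(x) → 0 as |x| → ∞, and solve −Δu + u = v^{p−1} and −Δv + v = u^{q−1} pointwise in A_R. Then q·v(x)^p ≥ p·u(x)^q for every x ∈ A_R. -/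
open Set Filter

theorem second_dir_le {E : Type*} [NormedAddCommGroup E] [NormedSpace ℝ E]
    (g : E → ℝ) (x e : E) (hg : ContDiffAt ℝ 2 g x) (hm : IsLocalMax g x) :
    fderiv ℝ (fun y => fderiv ℝ g y e) x e ≤ 0 := by
  by_contra hpos
  push Not at hpos
  have hline : ∀ t : ℝ, HasDerivAt (fun t : ℝ => x + t • e) e t := by
    intro t
    simpa using ((hasDerivAt_id t).smul_const e).const_add x
  have hc : Tendsto (fun t : ℝ => x + t • e) (nhds 0) (nhds x) := by
    have := (hline 0).continuousAt.tendsto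
    simpa using this
  have hd : ∀ᶠ y in nhds x, DifferentiableAt ℝ g y := by
    filter_upwards [hg.eventually (by simp)] with y hy
    exact hy.differentiableAt (by norm_num)
  have h1 : deriv (fun t : ℝ => g (x + t • e)) =ᶠ[nhds 0]
      (fun t : ℝ => fderiv ℝ g (x + t • e) e) := by
    filter_upwards [hc.eventually hd] with t ht
    exact (ht.hasFDerivAt.comp_hasDerivAt t (hline t)).deriv
  have hF : DifferentiableAt ℝ (fun y => fderiv ℝ g y e) x := by
    have : ContDiffAt ℝ 1 (fderiv ℝ g) x := hg.fderiv_right (by norm_num)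
    exact (this.differentiableAt (by norm_num)).clm_apply (differentiableAt_const e)
  have h2 : deriv (deriv (fun t : ℝ => g (x + t • e))) 0
      = fderiv ℝ (fun y => fderiv ℝ g y e) x e := by
    rw [h1.deriv_eq]
    have hF' : HasFDerivAt (fun y => fderiv ℝ g y e)
        (fderiv ℝ (fun y => fderiv ℝ g y e) x) (x + (0:ℝ) • e) := by
      simpa using hF.hasFDerivAt
    exact (hF'.comp_hasDerivAt (0:ℝ) (hline 0)).deriv
  have hmax : IsLocalMax (fun t : ℝ => g (x + t • e)) 0 := by
    have := hc.eventually hm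
    filter_upwards [this] with t ht
    simpa using ht
  have hcont : ContinuousAt (fun t : ℝ => g (x + t • e)) 0 := by
    have : ContinuousAt g (x + (0:ℝ) • e) := by simpa using hg.continuousAt
    exact ContinuousAt.comp (f := fun t : ℝ => x + t • e) this (hline 0).continuousAt
  have hmin := isLocalMin_of_deriv_deriv_pos (by rw [h2]; exact hpos) hmax.deriv_eq_zero hcont
  have hconst : (fun t : ℝ => g (x + t • e)) =ᶠ[nhds 0] (fun _ => g (x + (0:ℝ) • e)) := by
    filter_upwards [hmax, hmin] with t h1 h2
    exact le_antisymm h1 h2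
  have : deriv (deriv (fun t : ℝ => g (x + t • e))) 0 = 0 := by
    rw [hconst.deriv.deriv_eq]
    simp
  linarith

theorem lap_comb {N : ℕ} (u v : EuclideanSpace ℝ (Fin N) → ℝ) (c : ℝ)
    (x : EuclideanSpace ℝ (Fin N)) (hu : ContDiffAt ℝ 2 u x) (hv : ContDiffAt ℝ 2 v x) :
    lap (fun y => c * u y - v y) x = c * lap u x - lap v x := by
  unfold lap
  rw [Finset.mul_sum, ← Finset.sum_sub_distrib]
  refine Finset.sum_congr rfl fun i _ => ?_
  set e : EuclideanSpace ℝ (Fin N) := EuclideanSpace.single i 1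
  have key : ∀ w : EuclideanSpace ℝ (Fin N) → ℝ, ContDiffAt ℝ 2 w x →
      (∀ᶠ y in nhds x, DifferentiableAt ℝ w y) ∧
        DifferentiableAt ℝ (fun y => fderiv ℝ w y e) x := by
    intro w hw
    constructor
    · filter_upwards [hw.eventually (by simp)] with y hy
      exact hy.differentiableAt (by norm_num)
    · have : ContDiffAt ℝ 1 (fderiv ℝ w) x := hw.fderiv_right (by norm_num)
      exact (this.differentiableAt (by norm_num)).clm_apply (differentiableAt_const e)
  obtain ⟨hu1, hu2⟩ := key u hu
  obtain ⟨hv1, hv2⟩ := key v hv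
  have h1 : (fun y => fderiv ℝ (fun y => c * u y - v y) y e) =ᶠ[nhds x]
      (fun y => c * fderiv ℝ u y e - fderiv ℝ v y e) := by
    filter_upwards [hu1, hv1] with y h1 h2
    rw [((h1.hasFDerivAt.const_mul c).fun_sub h2.hasFDerivAt).fderiv]
    simp
  rw [h1.fderiv_eq, ((hu2.hasFDerivAt.const_mul c).fun_sub hv2.hasFDerivAt).fderiv]
  simp

/-- pointwise comparison `q·v^p ≥ p·u^q` on the exterior domain
`A_R = {|x| > R}` for positive classical solutions of the system
`−Δu + u = v^(p−1)`, `−Δv + v = u^(q−1)` vanishing on `{|x| = R}` and at infinity. -/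
theorem stmt_4 (N : ℕ) (hN : 2 ≤ N) (R : ℝ) (hR : 0 < R)
    (p q : ℝ) (hp : 2 ≤ p) (hpq : p ≤ q)
    (AR : Set (EuclideanSpace ℝ (Fin N))) (hAR : AR = {x | R < ‖x‖})
    (u v : EuclideanSpace ℝ (Fin N) → ℝ)
    (hu2 : ContDiffOn ℝ 2 u AR) (hv2 : ContDiffOn ℝ 2 v AR)
    (huc : ContinuousOn u (closure AR)) (hvc : ContinuousOn v (closure AR))
    (hup : ∀ x ∈ AR, 0 < u x) (hvp : ∀ x ∈ AR, 0 < v x)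
    (hub : ∀ x : EuclideanSpace ℝ (Fin N), ‖x‖ = R → u x = 0)
    (hvb : ∀ x : EuclideanSpace ℝ (Fin N), ‖x‖ = R → v x = 0)
    (hulim : Tendsto u (comap (fun x : EuclideanSpace ℝ (Fin N) => ‖x‖) atTop) (nhds 0))
    (hvlim : Tendsto v (comap (fun x : EuclideanSpace ℝ (Fin N) => ‖x‖) atTop) (nhds 0))
    (heq1 : ∀ x ∈ AR, -lap u x + u x = v x ^ (p - 1))
    (heq2 : ∀ x ∈ AR, -lap v x + v x = u x ^ (q - 1)) :
    ∀ x ∈ AR, p * u x ^ q ≤ q * v x ^ p := by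
  have hp0 : 0 < p := by linarith
  have hq0 : 0 < q := by linarith
  set s : ℝ := q / p with hs
  have hs1 : 1 ≤ s := by rw [hs, le_div_iff₀ hp0]; linarith
  have hs0 : 0 < s := by linarith
  set l : ℝ := (p / q) ^ (1 / p) with hl
  have hl0 : 0 < l := Real.rpow_pos_of_pos (by positivity) _
  have hlp : l ^ p = p / q := by
    rw [hl, ← Real.rpow_mul (by positivity)]
    rw [one_div_mul_cancel hp0.ne', Real.rpow_one]
  have hsp : s * p = q := by rw [hs]; field_simp
  have hopen : IsOpen AR := by
    rw [hAR]; exact isOpen_lt continuous_const continuous_norm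
  have hcl : closure AR = {x | R ≤ ‖x‖} := by
    have h1 : AR = (Metric.closedBall 0 R)ᶜ := by
      rw [hAR]; ext y; simp
    rw [h1, closure_compl, interior_closedBall _ hR.ne']
    ext y; simp
  have main : ∀ x ∈ AR, l * u x ^ s ≤ v x := by
    intro x1 hx1
    by_contra hlt
    push Not at hlt
    set w : EuclideanSpace ℝ (Fin N) → ℝ := fun y => l * u y ^ s - v y with hw
    have hw1 : 0 < w x1 := by simp only [hw]; linarith
    have hwlim : Tendsto w (comap (fun x : EuclideanSpace ℝ (Fin N) => ‖x‖) atTop) (nhds 0) := by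
      have h := ((hulim.rpow_const (p := s) (Or.inr hs0.le)).const_mul l).sub hvlim
      simpa [Real.zero_rpow hs0.ne'] using h
    have hev := hwlim.eventually (gt_mem_nhds hw1)
    rw [eventually_comap] at hev
    obtain ⟨M, hM⟩ := eventually_atTop.1 hev
    set K : Set (EuclideanSpace ℝ (Fin N)) := closure AR ∩ Metric.closedBall 0 M with hK
    have hKc : IsCompact K := (isCompact_closedBall 0 M).inter_left isClosed_closure
    have hx1M : ‖x1‖ ≤ M := by
      by_contra h
      push Not at h
      exact lt_irrefl _ (hM _ h.le x1 rfl)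
    have hx1K : x1 ∈ K := ⟨subset_closure hx1, by simpa using hx1M⟩
    have hwc : ContinuousOn w (closure AR) :=
      (continuousOn_const.mul (huc.rpow_const fun _ _ => Or.inr hs0.le)).sub hvc
    obtain ⟨x0, hx0K, hx0⟩ := hKc.exists_isMaxOn ⟨x1, hx1K⟩ (hwc.mono inter_subset_left)
    have hx01 : w x1 ≤ w x0 := hx0 hx1K
    have hx0AR : x0 ∈ AR := by
      have h1 : R ≤ ‖x0‖ := by have := hx0K.1; rwa [hcl] at this
      rcases h1.lt_or_eq with h | h
      · rw [hAR]; exact h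
      · exfalso
        have : w x0 = 0 := by
          simp only [hw]
          rw [hub x0 h.symm, hvb x0 h.symm, Real.zero_rpow hs0.ne']; ring
        linarith
    have hglob : ∀ y ∈ AR, w y ≤ w x0 := by
      intro y hy
      by_cases h : ‖y‖ ≤ M
      · exact hx0 ⟨subset_closure hy, by simpa using h⟩
      · push Not at h
        exact (hM _ h.le y rfl).le.trans hx01
    have hu0 := hup x0 hx0AR
    have hv0 := hvp x0 hx0AR
    set c : ℝ := l * (s * u x0 ^ (s - 1)) with hc
    have hc0 : 0 < c := by
      have := Real.rpow_pos_of_pos hu0 (s - 1)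
      positivity
    have hus : u x0 ^ (s - 1) * u x0 = u x0 ^ s := by
      rw [← Real.rpow_add_one hu0.ne']; ring_nf
    have hmax : IsLocalMax (fun y => c * u y - v y) x0 := by
      filter_upwards [hopen.mem_nhds hx0AR] with y hy
      have huy := hup y hy
      have hb := one_add_mul_self_le_rpow_one_add (s := u y / u x0 - 1) (by
        have : 0 < u y / u x0 := by positivity
        linarith) hs1
      have hb2 : (1 + (u y / u x0 - 1)) ^ s = u y ^ s / u x0 ^ s := by
        rw [add_sub_cancel, Real.div_rpow huy.le hu0.le]
      have hus0 : 0 < u x0 ^ s := Real.rpow_pos_of_pos hu0 s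
      rw [hb2, le_div_iff₀ hus0] at hb
      have hb3 : (1 + s * (u y / u x0 - 1)) * u x0 ^ s
          = u x0 ^ s + s * u x0 ^ (s - 1) * (u y - u x0) := by
        rw [← hus]; field_simp
      rw [hb3] at hb
      have hb4 := mul_le_mul_of_nonneg_left hb hl0.le
      have hg := hglob y hy
      simp only [hw] at hg
      simp only [hc]
      nlinarith
    have hcu : ContDiffAt ℝ 2 u x0 := hu2.contDiffAt (hopen.mem_nhds hx0AR)
    have hcv : ContDiffAt ℝ 2 v x0 := hv2.contDiffAt (hopen.mem_nhds hx0AR)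
    have hlap : lap (fun y => c * u y - v y) x0 ≤ 0 :=
      Finset.sum_nonpos fun i _ =>
        second_dir_le _ x0 _ ((contDiffAt_const.mul hcu).sub hcv) hmax
    rw [lap_comb u v c x0 hcu hcv] at hlap
    have e1 := heq1 x0 hx0AR
    have e2 := heq2 x0 hx0AR
    have hlt0 : v x0 < l * u x0 ^ s := by
      have : 0 < w x0 := by linarith
      simp only [hw] at this; linarith
    have hcu0 : l * u x0 ^ s ≤ c * u x0 := by
      have : c * u x0 = s * (l * u x0 ^ s) := by rw [hc, ← hus]; ring
      rw [this]
      have : 0 < l * u x0 ^ s := by linarith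
      nlinarith
    have hcv0 : c * v x0 ^ (p - 1) ≤ u x0 ^ (q - 1) := by
      have h1 : v x0 ^ (p - 1) ≤ (l * u x0 ^ s) ^ (p - 1) :=
        Real.rpow_le_rpow hv0.le hlt0.le (by linarith)
      have h2 : (l * u x0 ^ s) ^ (p - 1) = l ^ (p - 1) * u x0 ^ (s * (p - 1)) := by
        rw [Real.mul_rpow hl0.le (Real.rpow_nonneg hu0.le _), ← Real.rpow_mul hu0.le]
      have h3 : l * l ^ (p - 1) = p / q := by
        rw [← hlp, mul_comm, ← Real.rpow_add_one hl0.ne']; ring_nf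
      have h4 : u x0 ^ (s - 1) * u x0 ^ (s * (p - 1)) = u x0 ^ (q - 1) := by
        rw [← Real.rpow_add hu0]; congr 1; rw [← hsp]; ring
      have h5 : s * (p / q) = 1 := by rw [hs]; field_simp
      calc c * v x0 ^ (p - 1) ≤ c * (l ^ (p - 1) * u x0 ^ (s * (p - 1))) := by
            rw [← h2]; exact mul_le_mul_of_nonneg_left h1 hc0.le
        _ = s * (l * l ^ (p - 1)) * (u x0 ^ (s - 1) * u x0 ^ (s * (p - 1))) := by
            rw [hc]; ring
        _ = u x0 ^ (q - 1) := by rw [h3, h4, h5, one_mul]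
    have e3 : c * lap u x0 = c * u x0 - c * v x0 ^ (p - 1) := by rw [← e1]; ring
    linarith
  intro x hx
  have hux := hup x hx
  have h := Real.rpow_le_rpow (mul_nonneg hl0.le (Real.rpow_nonneg hux.le s)) (main x hx) hp0.le
  rw [Real.mul_rpow hl0.le (Real.rpow_nonneg hux.le _), ← Real.rpow_mul hux.le, hsp, hlp] at h
  have h2 := mul_le_mul_of_nonneg_left h hq0.le
  have h3 : q * (p / q * u x ^ q) = p * u x ^ q := by field_simp
  linarith
end

section
/- Let N ≥ 2 be an integer, R > 0, and q ≥ p ≥ 2 reals. Suppose u, v : ℝ^N → ℝ are C² on A_R, continuous on closure(A_R), strictly positive on A_R, vanish on the boundary sphere {|x| = R}, satisfy u(x) → 0 and v(x) → 0 as |x| → ∞, and solve −Δu + u = v^{p−1} and −Δv + v = u^{q−1} pointwise in A_R. Assume moreover that v and |∇v| are square-integrable on A_R and that x ↦ u(x)^{q−1}·v(x) is integrable on A_R. Then ∫_{A_R} (|∇v|² + v²) dx ≤ sqrt(q/p) · ∫_{A_R} v^{(p+2)/2}·u^{(q−2)/2} dx, where the right-hand side is interpreted as the (possibly infinite) Lebesgue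 integral of a nonnegative function. -/
open Set Filter MeasureTheory
open scoped ENNReal

/-- first partials of a C² function are C¹ -/
lemma partial_contDiffAt {N : ℕ} {f : EuclideanSpace ℝ (Fin N) → ℝ}
    {x : EuclideanSpace ℝ (Fin N)} (hf : ContDiffAt ℝ 2 f x) (e : EuclideanSpace ℝ (Fin N)) :
    ContDiffAt ℝ 1 (fun y => fderiv ℝ f y e) x :=
  (hf.fderiv_right (m := 1) (by norm_num)).clm_apply contDiffAt_const

lemma second_le_zero {N : ℕ} {f : EuclideanSpace ℝ (Fin N) → ℝ}
    {x : EuclideanSpace ℝ (Fin N)} (hf : ContDiffAt ℝ 2 f x) (hm : IsLocalMax f x)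
    (e : EuclideanSpace ℝ (Fin N)) :
    fderiv ℝ (fun y => fderiv ℝ f y e) x e ≤ 0 := by
  by_contra! hc
  set g : ℝ → ℝ := fun t => f (x + t • e) with hg
  have hline : ∀ t : ℝ, HasDerivAt (fun t : ℝ => x + t • e) e t := fun t => by
    simpa using ((hasDerivAt_id t).smul_const e).const_add x
  have hl0 : Tendsto (fun t : ℝ => x + t • e) (nhds 0) (nhds x) := by
    have := (hline 0).continuousAt.tendsto
    simpa using this
  have hev : ∀ᶠ y in nhds x, DifferentiableAt ℝ f y :=
    (hf.eventually (by simp)).mono fun y hy => hy.differentiableAt (by norm_num)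
  have h1 : deriv g =ᶠ[nhds 0] fun t => fderiv ℝ f (x + t • e) e := by
    filter_upwards [hl0.eventually hev] with t ht
    exact (ht.hasFDerivAt.comp_hasDerivAt t (hline t)).deriv
  have h2 : deriv (deriv g) 0 = fderiv ℝ (fun y => fderiv ℝ f y e) x e := by
    rw [h1.deriv_eq]
    have hd : DifferentiableAt ℝ (fun y => fderiv ℝ f y e) (x + (0:ℝ) • e) := by
      simpa using (partial_contDiffAt hf e).differentiableAt (by norm_num)
    have := (hd.hasFDerivAt.comp_hasDerivAt (0:ℝ) (hline 0)).deriv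
    simpa [Function.comp_def] using this
  have hmg : IsLocalMax g 0 := by
    have := hl0.eventually hm
    filter_upwards [this] with t ht
    simpa [hg] using ht
  have hcont : ContinuousAt g 0 := by
    have : ContinuousAt f (x + (0:ℝ) • e) := by simpa using hf.continuousAt
    exact ContinuousAt.comp (f := fun t : ℝ => x + t • e) this (hline 0).continuousAt
  have hmin := isLocalMin_of_deriv_deriv_pos (by rw [h2]; exact hc) hmg.deriv_eq_zero hcont
  have heq : g =ᶠ[nhds 0] fun _ => g 0 := by
    filter_upwards [hmg, hmin] with t h1 h2 using le_antisymm h1 h2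
  have h3 : deriv g =ᶠ[nhds 0] fun _ => 0 := by
    have := heq.deriv
    simpa using this
  have h4 := h3.deriv_eq
  rw [h2] at h4
  simp at h4
  linarith

lemma grad_sq {N : ℕ} (f : EuclideanSpace ℝ (Fin N) → ℝ) (x : EuclideanSpace ℝ (Fin N)) :
    ‖gradient f x‖ ^ 2 = ∑ i : Fin N, (fderiv ℝ f x (EuclideanSpace.single i 1)) ^ 2 := by
  rw [EuclideanSpace.real_norm_sq_eq]
  refine Finset.sum_congr rfl fun i _ => ?_
  have : fderiv ℝ f x (EuclideanSpace.single i 1) = gradient f x i := by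
    have h : inner ℝ (gradient f x) (EuclideanSpace.single i 1)
      = fderiv ℝ f x (EuclideanSpace.single i 1) := by
      simp [gradient]
    rw [← h, EuclideanSpace.inner_single_right]; simp
  rw [this]

lemma level_compact {N : ℕ} {R : ℝ} {f : EuclideanSpace ℝ (Fin N) → ℝ}
    (hc : ContinuousOn f (closure {x | R < ‖x‖}))
    (hb : ∀ x, ‖x‖ = R → f x = 0)
    (hlim : Tendsto f (comap (fun x : EuclideanSpace ℝ (Fin N) => ‖x‖) atTop) (nhds 0))
    {δ : ℝ} (hδ : 0 < δ) :
    IsCompact (closure {x : EuclideanSpace ℝ (Fin N) | R < ‖x‖} ∩ f ⁻¹' (Ici δ)) ∧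
    closure {x : EuclideanSpace ℝ (Fin N) | R < ‖x‖} ∩ f ⁻¹' (Ici δ) ⊆ {x | R < ‖x‖} := by
  constructor
  · refine Metric.isCompact_of_isClosed_isBounded
      (hc.preimage_isClosed_of_isClosed isClosed_closure isClosed_Ici) ?_
    have h := hlim.eventually (gt_mem_nhds hδ)
    rw [eventually_comap] at h
    obtain ⟨B, hB⟩ := eventually_atTop.1 h
    refine (Metric.isBounded_closedBall (x := (0 : EuclideanSpace ℝ (Fin N))) (r := B)).subset ?_
    rintro x ⟨-, hx⟩
    rw [mem_closedBall_zero_iff]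
    by_contra! hlt
    have := hB _ hlt.le x rfl
    simp at hx
    linarith
  · rintro x ⟨hx, hx2⟩
    have hle : R ≤ ‖x‖ := by
      have : closure {x : EuclideanSpace ℝ (Fin N) | R < ‖x‖} ⊆ {x | R ≤ ‖x‖} :=
        closure_minimal (fun y hy => by simp only [mem_ofPred_eq] at hy ⊢; exact hy.le) (isClosed_le continuous_const continuous_norm)
      exact this hx
    refine lt_of_le_of_ne hle fun h => ?_
    have := hb x h.symm
    simp at hx2
    linarith

lemma comparison {N : ℕ} {R : ℝ}
    {p q : ℝ} (hp : 2 ≤ p) (hpq : p ≤ q)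
    {u v : EuclideanSpace ℝ (Fin N) → ℝ}
    (hu2 : ContDiffOn ℝ 2 u {x | R < ‖x‖}) (hv2 : ContDiffOn ℝ 2 v {x | R < ‖x‖})
    (huc : ContinuousOn u (closure {x | R < ‖x‖})) (hvc : ContinuousOn v (closure {x | R < ‖x‖}))
    (hup : ∀ x, R < ‖x‖ → 0 < u x) (hvp : ∀ x, R < ‖x‖ → 0 < v x)
    (hub : ∀ x : EuclideanSpace ℝ (Fin N), ‖x‖ = R → u x = 0)
    (hvb : ∀ x : EuclideanSpace ℝ (Fin N), ‖x‖ = R → v x = 0)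
    (hulim : Tendsto u (comap (fun x : EuclideanSpace ℝ (Fin N) => ‖x‖) atTop) (nhds 0))
    (hvlim : Tendsto v (comap (fun x : EuclideanSpace ℝ (Fin N) => ‖x‖) atTop) (nhds 0))
    (heq1 : ∀ x, R < ‖x‖ → -lap u x + u x = v x ^ (p - 1))
    (heq2 : ∀ x, R < ‖x‖ → -lap v x + v x = u x ^ (q - 1))
    (x : EuclideanSpace ℝ (Fin N)) (hx : R < ‖x‖) :
    ((q / p) ^ (-(1 / p))) * u x ^ (q / p) ≤ v x := by
  set s := q / p with hs
  have hp0 : 0 < p := by linarith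
  have hs1 : 1 ≤ s := by rw [hs, le_div_iff₀ hp0]; linarith
  have hs0 : 0 < s := by linarith
  set l := s ^ (-(1 / p)) with hl
  have hl0 : 0 < l := Real.rpow_pos_of_pos hs0 _
  have hlp : l ^ p * s = 1 := by
    rw [hl, ← Real.rpow_mul hs0.le]
    rw [show -(1 / p) * p = -1 by field_simp, Real.rpow_neg_one]
    field_simp
  by_contra! hcon
  set w : EuclideanSpace ℝ (Fin N) → ℝ := fun y => l * u y ^ s - v y with hw
  have hopen : IsOpen {x : EuclideanSpace ℝ (Fin N) | R < ‖x‖} :=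
    isOpen_lt continuous_const continuous_norm
  have hwc : ContinuousOn w (closure {x | R < ‖x‖}) :=
    (continuousOn_const.mul (huc.rpow_const fun _ _ => Or.inr hs0.le)).sub hvc
  have hwb : ∀ x, ‖x‖ = R → w x = 0 := fun x hx => by
    simp [hw, hub x hx, hvb x hx, Real.zero_rpow hs0.ne']
  have hwlim : Tendsto w (comap (fun x : EuclideanSpace ℝ (Fin N) => ‖x‖) atTop) (nhds 0) := by
    have := ((hulim.rpow_const (p := s) (Or.inr hs0.le)).const_mul l).sub hvlim
    simpa [Real.zero_rpow hs0.ne'] using this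
  have hδ : 0 < w x := by simp only [hw]; linarith
  obtain ⟨hK, hKs⟩ := level_compact hwc hwb hwlim hδ
  have hsub : ∀ y : EuclideanSpace ℝ (Fin N), R < ‖y‖ → y ∈ closure {x : EuclideanSpace ℝ (Fin N) | R < ‖x‖} :=
    fun y hy => subset_closure hy
  obtain ⟨z, hzK, hz⟩ := hK.exists_isMaxOn ⟨x, hsub x hx, le_refl (w x)⟩ (hwc.mono inter_subset_left)
  have hzR : R < ‖z‖ := hKs hzK
  have hzpos : 0 < w z := lt_of_lt_of_le hδ hzK.2
  have hmax : IsLocalMax w z := by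
    filter_upwards [hopen.mem_nhds hzR] with y hy
    by_cases h : w x ≤ w y
    · exact hz ⟨hsub y hy, h⟩
    · have h2 : w x ≤ w z := hzK.2
      linarith
  have hcu : ∀ y, R < ‖y‖ → ContDiffAt ℝ 2 u y := fun y hy => hu2.contDiffAt (hopen.mem_nhds hy)
  have hcv : ∀ y, R < ‖y‖ → ContDiffAt ℝ 2 v y := fun y hy => hv2.contDiffAt (hopen.mem_nhds hy)
  have hcw : ContDiffAt ℝ 2 w z :=
    (contDiffAt_const.mul ((hcu z hzR).rpow_const_of_ne (hup z hzR).ne')).sub (hcv z hzR)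
  have key : ∀ e : EuclideanSpace ℝ (Fin N),
      fderiv ℝ (fun y => fderiv ℝ w y e) z e =
       l * s * ((s - 1) * u z ^ (s - 2) * (fderiv ℝ u z e) ^ 2 +
         u z ^ (s - 1) * fderiv ℝ (fun y => fderiv ℝ u y e) z e)
        - fderiv ℝ (fun y => fderiv ℝ v y e) z e := by
    intro e
    have h1 : (fun y => fderiv ℝ w y e) =ᶠ[nhds z]
        fun y => l * (s * u y ^ (s - 1) * fderiv ℝ u y e) - fderiv ℝ v y e := by
      filter_upwards [hopen.mem_nhds hzR] with y hy
      have hu := ((hcu y hy).differentiableAt (by norm_num)).hasFDerivAt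
      have hv := ((hcv y hy).differentiableAt (by norm_num)).hasFDerivAt
      have := (((hu.rpow_const (p := s) (Or.inl (hup y hy).ne')).const_mul l).sub hv).fderiv
      rw [show w = fun y => l * u y ^ s - v y from rfl]
      erw [this]
      simp [mul_assoc]
    rw [h1.fderiv_eq]
    have hu := ((hcu z hzR).differentiableAt (by norm_num)).hasFDerivAt
    have hDu := ((partial_contDiffAt (hcu z hzR) e).differentiableAt (by norm_num)).hasFDerivAt
    have hDv := ((partial_contDiffAt (hcv z hzR) e).differentiableAt (by norm_num)).hasFDerivAt
    have := (((((hu.rpow_const (p := s - 1) (Or.inl (hup z hzR).ne')).const_mul s).mul hDu).const_mul l).sub hDv).fderiv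
    erw [this]
    simp
    rw [show s - 1 - 1 = s - 2 by ring]
    ring
  have hlap : l * s * (u z ^ (s - 1) * lap u z) - lap v z ≤ 0 := by
    have hsum : ∑ i : Fin N, fderiv ℝ (fun y => fderiv ℝ w y (EuclideanSpace.single i 1)) z
        (EuclideanSpace.single i 1) ≤ 0 :=
      Finset.sum_nonpos fun i _ => second_le_zero hcw hmax _
    refine le_trans ?_ hsum
    unfold lap
    rw [Finset.mul_sum, Finset.mul_sum, ← Finset.sum_sub_distrib]
    refine Finset.sum_le_sum fun i _ => ?_
    rw [key]
    have : 0 ≤ l * s * ((s - 1) * u z ^ (s - 2) * (fderiv ℝ u z (EuclideanSpace.single i 1)) ^ 2) := by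
      have := Real.rpow_nonneg (hup z hzR).le (s - 2)
      have h1 : 0 ≤ s - 1 := by linarith
      positivity
    linarith
  have hU := hup z hzR
  have hV := hvp z hzR
  have e1 : lap u z = u z - v z ^ (p - 1) := by linarith [heq1 z hzR]
  have e2 : lap v z = v z - u z ^ (q - 1) := by linarith [heq2 z hzR]
  rw [e1, e2] at hlap
  have hlt : v z < l * u z ^ s := by simp only [hw] at hzpos; linarith
  have hus : u z ^ (s - 1) * u z = u z ^ s := by
    rw [← Real.rpow_add_one hU.ne']; congr 1; ring
  have hvpow : v z ^ (p - 1) ≤ (l * u z ^ s) ^ (p - 1) :=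
    Real.rpow_le_rpow hV.le hlt.le (by linarith)
  have hid : l * s * u z ^ (s - 1) * (l * u z ^ s) ^ (p - 1) = u z ^ (q - 1) := by
    rw [Real.mul_rpow hl0.le (Real.rpow_nonneg hU.le _), ← Real.rpow_mul hU.le]
    have a1 : l * l ^ (p - 1) = l ^ p := by
      rw [mul_comm, ← Real.rpow_add_one hl0.ne']; congr 1; ring
    have a2 : u z ^ (s - 1) * u z ^ (s * (p - 1)) = u z ^ (q - 1) := by
      rw [← Real.rpow_add hU]; congr 1; rw [hs]; field_simp; ring
    calc _ = (l * l ^ (p - 1)) * s * (u z ^ (s - 1) * u z ^ (s * (p - 1))) := by ring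
      _ = _ := by rw [a1, a2, hlp, one_mul]
  have h5 : l * s * u z ^ (s - 1) * v z ^ (p - 1) ≤ u z ^ (q - 1) := by
    rw [← hid]
    have := Real.rpow_nonneg hU.le (s - 1)
    gcongr
  have h6 : l * u z ^ s ≤ l * s * u z ^ s := by
    have := Real.rpow_nonneg hU.le s
    nlinarith [mul_nonneg hl0.le this]
  have h7 : l * s * (u z ^ (s - 1) * (u z - v z ^ (p - 1))) =
      l * s * u z ^ s - l * s * u z ^ (s - 1) * v z ^ (p - 1) := by
    rw [← hus]; ring
  linarith

lemma integral_partial_zero {N : ℕ} {F : EuclideanSpace ℝ (Fin N) → ℝ}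
    (hF : ContDiff ℝ 1 F) (hs : HasCompactSupport F) (e : EuclideanSpace ℝ (Fin N)) :
    Integrable (fun x => fderiv ℝ F x e) ∧ ∫ x, fderiv ℝ F x e = 0 := by
  have h1 : Integrable (fun x => fderiv ℝ F x e) :=
    ((hF.continuous_fderiv (by norm_num)).clm_apply continuous_const).integrable_of_hasCompactSupport
      (hs.fderiv_apply ℝ e)
  refine ⟨h1, ?_⟩
  have := integral_mul_fderiv_eq_neg_fderiv_mul_of_integrable (μ := volume)
    (f := fun _ : EuclideanSpace ℝ (Fin N) => (1:ℝ)) (g := F) (v := e)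
    (by simp) (by simpa using h1)
    (by simpa using hF.continuous.integrable_of_hasCompactSupport hs)
    (fun x _ => by fun_prop) (fun x _ => hF.differentiable (by norm_num) x)
  simpa using this

lemma energy_cut {N : ℕ} {R : ℝ} {v h : EuclideanSpace ℝ (Fin N) → ℝ}
    (hv2 : ContDiffOn ℝ 2 v {x | R < ‖x‖})
    (hvc : ContinuousOn v (closure {x | R < ‖x‖}))
    (hvp : ∀ x, R < ‖x‖ → 0 < v x)
    (hhp : ∀ x, R < ‖x‖ → 0 ≤ h x)
    (hvb : ∀ x : EuclideanSpace ℝ (Fin N), ‖x‖ = R → v x = 0)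
    (hvlim : Tendsto v (comap (fun x : EuclideanSpace ℝ (Fin N) => ‖x‖) atTop) (nhds 0))
    (heq2 : ∀ x, R < ‖x‖ → -lap v x + v x = h x)
    (hint1 : IntegrableOn (fun x => ‖gradient v x‖ ^ 2) {x | R < ‖x‖})
    (hint2 : IntegrableOn (fun x => v x ^ 2) {x | R < ‖x‖})
    (hint3 : IntegrableOn (fun x => h x * v x) {x | R < ‖x‖})
    {ε : ℝ} (hε : 0 < ε) :
    ∫ x in {x : EuclideanSpace ℝ (Fin N) | R < ‖x‖},
      Real.smoothTransition (v x / ε - 1) * (‖gradient v x‖ ^ 2 + v x ^ 2) ≤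
    ∫ x in {x : EuclideanSpace ℝ (Fin N) | R < ‖x‖}, h x * v x := by
  classical
  set A : Set (EuclideanSpace ℝ (Fin N)) := {x | R < ‖x‖} with hA
  have hopen : IsOpen A := isOpen_lt continuous_const continuous_norm
  set S : ℝ → ℝ := fun t => Real.smoothTransition (t / ε - 1) with hS
  have hSc : ContDiff ℝ 2 S :=
    (Real.smoothTransition.contDiff (n := 2)).comp (by fun_prop)
  have hSm : Monotone S := fun a b hab => Real.smoothTransition.monotone (by gcongr)
  have hS0 : ∀ t, 0 ≤ S t := fun t => Real.smoothTransition.nonneg _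
  have hS1 : ∀ t, S t ≤ 1 := fun t => Real.smoothTransition.le_one _
  have hSz : ∀ t, t ≤ ε → S t = 0 := fun t ht =>
    Real.smoothTransition.zero_of_nonpos (by rw [sub_nonpos, div_le_one hε]; exact ht)
  have hcv : ∀ y ∈ A, ContDiffAt ℝ 2 v y := fun y hy => hv2.contDiffAt (hopen.mem_nhds hy)
  set e : Fin N → EuclideanSpace ℝ (Fin N) := fun i => EuclideanSpace.single i 1 with he
  set F : Fin N → EuclideanSpace ℝ (Fin N) → ℝ :=
    fun i => A.indicator (fun y => v y * S (v y) * fderiv ℝ v y (e i)) with hF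
  obtain ⟨hK, hKA⟩ := level_compact hvc hvb hvlim hε
  set K := closure A ∩ v ⁻¹' (Ici ε) with hKdef
  have hFz : ∀ i, ∀ x ∉ K, F i x = 0 := by
    intro i x hx
    by_cases hxA : x ∈ A
    · have : v x ≤ ε := by
        by_contra! hlt
        exact hx ⟨subset_closure hxA, hlt.le⟩
      simp [hF, hSz _ this]
    · simp [hF, hxA]
  have hFcs : ∀ i, HasCompactSupport (F i) := fun i =>
    HasCompactSupport.intro hK (hFz i)
  have hFe : ∀ i, ∀ x ∈ A, F i =ᶠ[nhds x] fun y => v y * S (v y) * fderiv ℝ v y (e i) := by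
    intro i x hx
    filter_upwards [hopen.mem_nhds hx] with y hy
    simp [hF, hy]
  have hFc : ∀ i, ContDiff ℝ 1 (F i) := by
    intro i
    rw [contDiff_iff_contDiffAt]
    intro x
    by_cases hx : x ∈ K
    · have hxA : x ∈ A := hKA hx
      refine ContDiffAt.congr_of_eventuallyEq ?_ (hFe i x hxA)
      have h1 : ContDiffAt ℝ 1 v x := (hcv x hxA).of_le (by norm_num)
      have h2 : ContDiffAt ℝ 1 (fun y => S (v y)) x :=
        (hSc.of_le (by norm_num)).contDiffAt.comp x h1
      exact (h1.mul h2).mul (partial_contDiffAt (hcv x hxA) (e i))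
    · refine ContDiffAt.congr_of_eventuallyEq (f := fun _ => (0:ℝ)) contDiffAt_const ?_
      filter_upwards [hK.isClosed.isOpen_compl.mem_nhds hx] with y hy using hFz i y hy
  have hder : ∀ i, ∀ x ∈ A, fderiv ℝ (F i) x (e i) =
      (S (v x) + v x * deriv S (v x)) * (fderiv ℝ v x (e i)) ^ 2 +
        v x * S (v x) * fderiv ℝ (fun y => fderiv ℝ v y (e i)) x (e i) := by
    intro i x hx
    rw [(hFe i x hx).fderiv_eq]
    have hv := ((hcv x hx).differentiableAt (by norm_num)).hasFDerivAt
    have hD := ((partial_contDiffAt (hcv x hx) (e i)).differentiableAt (by norm_num)).hasFDerivAt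
    have hSd := ((hSc.differentiable (by norm_num)) (v x)).hasDerivAt.comp_hasFDerivAt x hv
    have := ((hv.mul hSd).mul hD).fderiv
    erw [this]
    simp
    ring
  have hderz : ∀ i, ∀ x ∉ A, fderiv ℝ (F i) x (e i) = 0 := by
    intro i x hx
    have hxK : x ∉ K := fun h => hx (hKA h)
    have : F i =ᶠ[nhds x] fun _ => 0 := by
      filter_upwards [hK.isClosed.isOpen_compl.mem_nhds hxK] with y hy using hFz i y hy
    rw [this.fderiv_eq]; simp
  set H : EuclideanSpace ℝ (Fin N) → ℝ := fun x => ∑ i, fderiv ℝ (F i) x (e i) with hH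
  have hHi : Integrable H :=
    integrable_finsetSum _ fun i _ => (integral_partial_zero (hFc i) (hFcs i) (e i)).1
  have hH0 : ∫ x in A, H x = 0 := by
    rw [setIntegral_eq_integral_of_forall_compl_eq_zero]
    · rw [hH, integral_finsetSum _ fun i _ => (integral_partial_zero (hFc i) (hFcs i) (e i)).1]
      exact Finset.sum_eq_zero fun i _ => (integral_partial_zero (hFc i) (hFcs i) (e i)).2
    · intro x hx
      exact Finset.sum_eq_zero fun i _ => hderz i x hx
  have hHA : ∀ x ∈ A, S (v x) * (‖gradient v x‖ ^ 2 + v x ^ 2) ≤ h x * v x + H x := by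
    intro x hx
    have h1 : H x = (S (v x) + v x * deriv S (v x)) * ‖gradient v x‖ ^ 2 +
        v x * S (v x) * lap v x := by
      rw [grad_sq, lap, Finset.mul_sum, Finset.mul_sum, ← Finset.sum_add_distrib]
      exact Finset.sum_congr rfl fun i _ => hder i x hx
    have h2 : lap v x = v x - h x := by linarith [heq2 x hx]
    rw [h1, h2]
    have h3 : 0 ≤ deriv S (v x) := hSm.deriv_nonneg
    have h4 := hvp x hx
    have h5 := hhp x hx
    have h6 : 0 ≤ v x * deriv S (v x) * ‖gradient v x‖ ^ 2 := by positivity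
    have h7 : 0 ≤ h x * v x * (1 - S (v x)) :=
      mul_nonneg (mul_nonneg h5 h4.le) (by linarith [hS1 (v x)])
    nlinarith
  have hmeas : AEStronglyMeasurable (fun x => S (v x)) (volume.restrict A) :=
    (hSc.continuous.comp_continuousOn hv2.continuousOn).aestronglyMeasurable hopen.measurableSet
  have hli : IntegrableOn (fun x => S (v x) * (‖gradient v x‖ ^ 2 + v x ^ 2)) A :=
    (hint1.add hint2).bdd_mul (c := 1) hmeas
      (Eventually.of_forall fun x => by
        rw [Real.norm_eq_abs, abs_of_nonneg (hS0 _)]; exact hS1 _)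
  calc _ ≤ ∫ x in A, (h x * v x + H x) :=
        setIntegral_mono_on hli (hint3.add hHi.integrableOn) hopen.measurableSet hHA
    _ = _ := by rw [integral_add hint3 hHi.integrableOn, hH0, add_zero]

lemma energy {N : ℕ} {R : ℝ} {v h : EuclideanSpace ℝ (Fin N) → ℝ}
    (hv2 : ContDiffOn ℝ 2 v {x | R < ‖x‖})
    (hvc : ContinuousOn v (closure {x | R < ‖x‖}))
    (hvp : ∀ x, R < ‖x‖ → 0 < v x)
    (hhp : ∀ x, R < ‖x‖ → 0 ≤ h x)
    (hvb : ∀ x : EuclideanSpace ℝ (Fin N), ‖x‖ = R → v x = 0)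
    (hvlim : Tendsto v (comap (fun x : EuclideanSpace ℝ (Fin N) => ‖x‖) atTop) (nhds 0))
    (heq2 : ∀ x, R < ‖x‖ → -lap v x + v x = h x)
    (hint1 : IntegrableOn (fun x => ‖gradient v x‖ ^ 2) {x | R < ‖x‖})
    (hint2 : IntegrableOn (fun x => v x ^ 2) {x | R < ‖x‖})
    (hint3 : IntegrableOn (fun x => h x * v x) {x | R < ‖x‖}) :
    ∫ x in {x : EuclideanSpace ℝ (Fin N) | R < ‖x‖}, (‖gradient v x‖ ^ 2 + v x ^ 2) ≤
    ∫ x in {x : EuclideanSpace ℝ (Fin N) | R < ‖x‖}, h x * v x := by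
  have hopen : IsOpen {x : EuclideanSpace ℝ (Fin N) | R < ‖x‖} :=
    isOpen_lt continuous_const continuous_norm
  have hI : Integrable (fun x => ‖gradient v x‖ ^ 2 + v x ^ 2)
      (volume.restrict {x : EuclideanSpace ℝ (Fin N) | R < ‖x‖}) := Integrable.add hint1 hint2
  have hcut := fun n : ℕ => energy_cut hv2 hvc hvp hhp hvb hvlim heq2 hint1 hint2 hint3
    (ε := 1 / ((n:ℝ) + 1)) (by positivity)
  refine le_of_tendsto' (tendsto_integral_of_dominated_convergence
    (fun x => ‖gradient v x‖ ^ 2 + v x ^ 2) ?_ hI ?_ ?_) hcut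
  · intro n
    refine AEStronglyMeasurable.mul ?_ hI.aestronglyMeasurable
    refine ContinuousOn.aestronglyMeasurable ?_ hopen.measurableSet
    exact Real.smoothTransition.continuous.comp_continuousOn
      ((hv2.continuousOn.div_const _).sub continuousOn_const)
  · intro n
    refine Eventually.of_forall fun x => ?_
    have h0 := Real.smoothTransition.nonneg (v x / (1 / ((n:ℝ) + 1)) - 1)
    have h1 := Real.smoothTransition.le_one (v x / (1 / ((n:ℝ) + 1)) - 1)
    rw [Real.norm_eq_abs, abs_of_nonneg (by positivity)]
    exact mul_le_of_le_one_left (by positivity) h1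
  · refine (ae_restrict_mem hopen.measurableSet).mono fun x hx => ?_
    have hv := hvp x hx
    refine tendsto_const_nhds.congr' ?_
    obtain ⟨m, hm⟩ := exists_nat_ge (2 / v x)
    filter_upwards [eventually_ge_atTop m] with n hn
    have hn' : (m:ℝ) ≤ n := by exact_mod_cast hn
    have h2 : 2 ≤ v x * n := by
      rw [div_le_iff₀ hv] at hm
      nlinarith
    rw [Real.smoothTransition.one_of_one_le, one_mul]
    rw [div_div_eq_mul_div, div_one]
    nlinarith

theorem stmt_6 (N : ℕ) (hN : 2 ≤ N) (R : ℝ) (hR : 0 < R)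
    (p q : ℝ) (hp : 2 ≤ p) (hpq : p ≤ q)
    (AR : Set (EuclideanSpace ℝ (Fin N))) (hAR : AR = {x | R < ‖x‖})
    (u v : EuclideanSpace ℝ (Fin N) → ℝ)
    (hu2 : ContDiffOn ℝ 2 u AR) (hv2 : ContDiffOn ℝ 2 v AR)
    (huc : ContinuousOn u (closure AR)) (hvc : ContinuousOn v (closure AR))
    (hup : ∀ x ∈ AR, 0 < u x) (hvp : ∀ x ∈ AR, 0 < v x)
    (hub : ∀ x : EuclideanSpace ℝ (Fin N), ‖x‖ = R → u x = 0)
    (hvb : ∀ x : EuclideanSpace ℝ (Fin N), ‖x‖ = R → v x = 0)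
    (hulim : Tendsto u (comap (fun x : EuclideanSpace ℝ (Fin N) => ‖x‖) atTop) (nhds 0))
    (hvlim : Tendsto v (comap (fun x : EuclideanSpace ℝ (Fin N) => ‖x‖) atTop) (nhds 0))
    (heq1 : ∀ x ∈ AR, -lap u x + u x = v x ^ (p - 1))
    (heq2 : ∀ x ∈ AR, -lap v x + v x = u x ^ (q - 1))
    (hint1 : IntegrableOn (fun x => ‖gradient v x‖ ^ 2) AR)
    (hint2 : IntegrableOn (fun x => v x ^ 2) AR)
    (hint3 : IntegrableOn (fun x => u x ^ (q - 1) * v x) AR) :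
    ENNReal.ofReal (∫ x in AR, (‖gradient v x‖ ^ 2 + v x ^ 2)) ≤
      ENNReal.ofReal (Real.sqrt (q / p)) *
        ∫⁻ x in AR, ENNReal.ofReal (v x ^ ((p + 2) / 2) * u x ^ ((q - 2) / 2)) := by

  subst hAR
  have hp0 : 0 < p := by linarith
  have hq0 : 0 < q := by linarith
  have hopen : IsOpen {x : EuclideanSpace ℝ (Fin N) | R < ‖x‖} :=
    isOpen_lt continuous_const continuous_norm
  have hE := energy (h := fun x => u x ^ (q - 1)) hv2 hvc hvp
    (fun x hx => Real.rpow_nonneg (hup x hx).le _) hvb hvlim heq2 hint1 hint2 hint3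
  have hcmp := comparison hp hpq hu2 hv2 huc hvc hup hvp hub hvb hulim hvlim heq1 heq2
  refine (ENNReal.ofReal_le_ofReal hE).trans ?_
  rw [ofReal_integral_eq_lintegral_ofReal hint3
    ((ae_restrict_mem hopen.measurableSet).mono fun x hx =>
      mul_nonneg (Real.rpow_nonneg (hup x hx).le _) (hvp x hx).le),
    ← lintegral_const_mul' _ _ ENNReal.ofReal_ne_top]
  refine setLIntegral_mono' hopen.measurableSet fun x hx => ?_
  rw [← ENNReal.ofReal_mul (Real.sqrt_nonneg _)]
  refine ENNReal.ofReal_le_ofReal ?_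
  have hU := hup x hx
  have hV := hvp x hx
  have hs0 : 0 < q / p := by positivity
  have hc := Real.rpow_le_rpow (by positivity) (hcmp x hx) (show 0 ≤ p / 2 by positivity)
  rw [Real.mul_rpow (by positivity) (by positivity), ← Real.rpow_mul hs0.le,
    ← Real.rpow_mul hU.le, show -(1 / p) * (p / 2) = -(1 / 2) by field_simp,
    show q / p * (p / 2) = q / 2 by field_simp, Real.rpow_neg hs0.le,
    ← Real.sqrt_eq_rpow, inv_mul_le_iff₀ (Real.sqrt_pos.2 hs0)] at hc
  have e1 : u x ^ (q - 1) = u x ^ (q / 2) * u x ^ ((q - 2) / 2) := by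
    rw [← Real.rpow_add hU]; congr 1; ring
  have e2 : v x ^ ((p + 2) / 2) = v x ^ (p / 2) * v x := by
    rw [← Real.rpow_add_one hV.ne']; congr 1; ring
  rw [e1, e2]
  have h3 : 0 ≤ u x ^ ((q - 2) / 2) * v x := by positivity
  calc _ = u x ^ (q / 2) * (u x ^ ((q - 2) / 2) * v x) := by ring
    _ ≤ (Real.sqrt (q / p) * v x ^ (p / 2)) * (u x ^ ((q - 2) / 2) * v x) := by gcongr
    _ = _ := by ring
end

section
/- Let N ≥ 2 and let m, m' be integers with 1 ≤ m' < m ≤ N − 1. Suppose f : ℝ^N → ℝ satisfies: (i) f(x) = f(y) whenever sqrt(x₁² + ⋯ + x_m²) = sqrt(y₁² + ⋯ + y_m²) and sqrt(x_{m+1}² + ⋯ + x_N²) = sqrt(y_{m+1}² + ⋯ + y_N²); and (ii) f(x) = f(y) whenever sqrt(x₁² + ⋯ + x_{m'}²) = sqrt(y₁² + ⋯ + y_{m'}²) and sqrt(x_{m'+1}² + ⋯ + x_N²) = sqrt(y_{m'+1}² + ⋯ + y_N²). Then f is radial, i.e., f(x) = f(y) whenever |x| = |y|. Consequently, two solutions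 of the system which are invariant under the block decompositions ℝ^m × ℝ^n and ℝ^{m'} × ℝ^{n'} respectively (with n = N − m ≠ n' = N − m') can only coincide if they are both radial. -/
/-- `sVar k x` is the Euclidean norm of the first `k` coordinates of `x ∈ ℝ^N`. -/
noncomputable def sVar {N : ℕ} (k : ℕ) (x : EuclideanSpace ℝ (Fin N)) : ℝ :=
  Real.sqrt (∑ i : Fin N, if (i : ℕ) < k then x i ^ 2 else 0)

/-- `tVar k x` is the Euclidean norm of the last `N - k` coordinates of `x ∈ ℝ^N`. -/
noncomputable def tVar {N : ℕ} (k : ℕ) (x : EuclideanSpace ℝ (Fin N)) : ℝ :=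
  Real.sqrt (∑ i : Fin N, if (i : ℕ) < k then 0 else x i ^ 2)

/-- Sums over coordinates of a vector supported on two distinct coordinates. -/
lemma two_coord_sum {N : ℕ} (p q : Fin N) (hpq : p ≠ q) (a b : ℝ) (P : Fin N → Prop)
    [DecidablePred P] :
    (∑ i : Fin N, if P i then
      (EuclideanSpace.single p a + EuclideanSpace.single q b : EuclideanSpace ℝ (Fin N)) i ^ 2
      else 0) = (if P p then a ^ 2 else 0) + (if P q then b ^ 2 else 0) := by
  have h : ∀ i : Fin N, (if P i then
      (EuclideanSpace.single p a + EuclideanSpace.single q b : EuclideanSpace ℝ (Fin N)) i ^ 2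
      else 0) = (if i = p then (if P p then a ^ 2 else 0) else 0)
        + (if i = q then (if P q then b ^ 2 else 0) else 0) := by
    intro i
    by_cases hp : i = p
    · subst hp
      simp [hpq]
    · by_cases hq : i = q
      · subst hq
        simp [hp]
      · simp [hp, hq]
  rw [Finset.sum_congr rfl (fun i _ => h i), Finset.sum_add_distrib]
  simp

lemma sVar_two {N : ℕ} (k : ℕ) (p q : Fin N) (hpq : p ≠ q) (a b : ℝ) :
    sVar k (EuclideanSpace.single p a + EuclideanSpace.single q b) =
      Real.sqrt ((if (p : ℕ) < k then a ^ 2 else 0) + (if (q : ℕ) < k then b ^ 2 else 0)) := by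
  unfold sVar
  rw [two_coord_sum p q hpq a b (fun i => (i : ℕ) < k)]

lemma tVar_two {N : ℕ} (k : ℕ) (p q : Fin N) (hpq : p ≠ q) (a b : ℝ) :
    tVar k (EuclideanSpace.single p a + EuclideanSpace.single q b) =
      Real.sqrt ((if (p : ℕ) < k then 0 else a ^ 2) + (if (q : ℕ) < k then 0 else b ^ 2)) := by
  unfold tVar
  have := two_coord_sum p q hpq a b (fun i => ¬ (i : ℕ) < k)
  simp only [ite_not] at this
  rw [this]

lemma sVar_sq_add_tVar_sq {N : ℕ} (k : ℕ) (x : EuclideanSpace ℝ (Fin N)) :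
    sVar k x ^ 2 + tVar k x ^ 2 = ‖x‖ ^ 2 := by
  unfold sVar tVar
  rw [Real.sq_sqrt, Real.sq_sqrt, EuclideanSpace.norm_sq_eq, ← Finset.sum_add_distrib]
  · apply Finset.sum_congr rfl
    intro i _
    split_ifs <;> simp
  · apply Finset.sum_nonneg
    intro i _
    split_ifs <;> positivity
  · apply Finset.sum_nonneg
    intro i _
    split_ifs <;> positivity

/-- if `f : ℝ^N → ℝ` is invariant under `O(m) × O(n)` (i.e. depends only on
the norms of the first `m` and last `n = N − m` coordinates) and under `O(m') × O(n')`
with `1 ≤ m' < m ≤ N − 1`, then `f` is radial. -/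
theorem stmt_7 (N m m' : ℕ) (hN : 2 ≤ N) (hm'1 : 1 ≤ m') (hm'm : m' < m)
    (hmN : m ≤ N - 1)
    (f : EuclideanSpace ℝ (Fin N) → ℝ)
    (h1 : ∀ x y : EuclideanSpace ℝ (Fin N),
      sVar m x = sVar m y → tVar m x = tVar m y → f x = f y)
    (h2 : ∀ x y : EuclideanSpace ℝ (Fin N),
      sVar m' x = sVar m' y → tVar m' x = tVar m' y → f x = f y) :
    ∀ x y : EuclideanSpace ℝ (Fin N), ‖x‖ = ‖y‖ → f x = f y := by
  obtain ⟨p, hp⟩ : ∃ p : Fin N, (p : ℕ) = m' := ⟨⟨m', by omega⟩, rfl⟩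
  obtain ⟨q, hq⟩ : ∃ q : Fin N, (q : ℕ) = N - 1 := ⟨⟨N - 1, by omega⟩, rfl⟩
  have hpq : p ≠ q := by
    intro h
    rw [h] at hp
    omega
  have key : ∀ x : EuclideanSpace ℝ (Fin N),
      f x = f (EuclideanSpace.single p ‖x‖ + EuclideanSpace.single q 0) := by
    intro x
    have hpm : (p : ℕ) < m := by omega
    have hqm : ¬ (q : ℕ) < m := by omega
    have hpm' : ¬ (p : ℕ) < m' := by omega
    have hqm' : ¬ (q : ℕ) < m' := by omega
    have hs : 0 ≤ sVar m x := Real.sqrt_nonneg _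
    have ht : 0 ≤ tVar m x := Real.sqrt_nonneg _
    rw [h1 x (EuclideanSpace.single p (sVar m x) + EuclideanSpace.single q (tVar m x))]
    · apply h2
      · rw [sVar_two _ _ _ hpq, sVar_two _ _ _ hpq]
        simp only [hpm', hqm', if_false]
      · rw [tVar_two _ _ _ hpq, tVar_two _ _ _ hpq]
        simp only [hpm', hqm', if_false]
        rw [sVar_sq_add_tVar_sq]
        simp
    · rw [sVar_two _ _ _ hpq]
      simp only [hpm, hqm, if_true, if_false, add_zero]
      rw [Real.sqrt_sq hs]
    · rw [tVar_two _ _ _ hpq]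
      simp only [hpm, hqm, if_true, if_false, zero_add]
      rw [Real.sqrt_sq ht]
  intro x y hxy
  rw [key x, key y, hxy]
end

section
/- Let R > 0, let m, n ≥ 1 be integers, and let c > 0 be a constant such that sin(θ) ≤ c·sin(θ − π/4) for all θ ∈ [π/3, π/2]. Let h : (R, ∞) × [0, π/2] → [0, ∞] be measurable and such that for each r ∈ (R, ∞) the map θ ↦ h(r, θ) is nonincreasing on [0, π/2]. Then ∫_R^∞ ∫_{π/3}^{π/2} r^{m+n−1}·cos(θ)^{m−1}·sin(θ)^{n−1}·h(r, θ) dθ dr ≤ c^{n−1} · ∫_R^∞ ∫_0^{π/3} r^{m+n−1}·cos(θ)^{m−1}·sin(θ)^{n−1}·h(r, θ) dθ dr, where the integrals are (possibly infinite) Lebesgue integrals of nonnegative functions. -/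
open Set Real MeasureTheory
open scoped ENNReal

/-- for `h ≥ 0` measurable, nonincreasing in `θ` on `[0, π/2]` for each
`r > R`, and a constant `c > 0` with `sin θ ≤ c·sin(θ − π/4)` on `[π/3, π/2]`, the part
of the weighted integral over `θ ∈ [π/3, π/2]` is controlled by `c^(n−1)` times the part
over `θ ∈ [0, π/3]`. -/
theorem stmt_11 (R : ℝ) (hR : 0 < R) (m n : ℕ) (hm : 1 ≤ m) (hn : 1 ≤ n)
    (c : ℝ) (hc : 0 < c)
    (hsin : ∀ θ ∈ Icc (π / 3) (π / 2), Real.sin θ ≤ c * Real.sin (θ - π / 4))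
    (h : ℝ → ℝ → ℝ≥0∞) (hmeas : Measurable (Function.uncurry h))
    (hmono : ∀ r ∈ Ioi R, AntitoneOn (h r) (Icc 0 (π / 2))) :
    ∫⁻ r in Ioi R, ∫⁻ θ in Icc (π / 3) (π / 2),
        ENNReal.ofReal
            (r ^ (m + n - 1) * Real.cos θ ^ (m - 1) * Real.sin θ ^ (n - 1)) * h r θ
      ≤ ENNReal.ofReal (c ^ (n - 1)) *
        ∫⁻ r in Ioi R, ∫⁻ θ in Icc 0 (π / 3),
          ENNReal.ofReal
            (r ^ (m + n - 1) * Real.cos θ ^ (m - 1) * Real.sin θ ^ (n - 1)) * h r θ := by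
  rw [← lintegral_const_mul' _ _ ENNReal.ofReal_ne_top]
  refine setLIntegral_mono' measurableSet_Ioi fun r hr => ?_
  have hr0 : 0 < r := hR.trans hr
  have hpi := Real.pi_pos
  rw [← lintegral_indicator measurableSet_Icc, ← lintegral_indicator measurableSet_Icc,
    ← lintegral_sub_right_eq_self (μ := volume) ((Icc 0 (π / 3)).indicator _) (π / 4),
    ← lintegral_const_mul' _ _ ENNReal.ofReal_ne_top]
  refine lintegral_mono fun θ => ?_
  by_cases hθ : θ ∈ Icc (π / 3) (π / 2)
  · have h1 := hθ.1
    have h2 := hθ.2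
    have hφ : θ - π / 4 ∈ Icc 0 (π / 3) := ⟨by linarith, by linarith⟩
    simp only [indicator_of_mem hθ, indicator_of_mem hφ]
    rw [← mul_assoc, ← ENNReal.ofReal_mul (by positivity)]
    have hcos : Real.cos θ ≤ Real.cos (θ - π / 4) :=
      Real.cos_le_cos_of_nonneg_of_le_pi hφ.1 (by linarith) (by linarith)
    have hcos0 : 0 ≤ Real.cos θ := Real.cos_nonneg_of_mem_Icc ⟨by linarith, h2⟩
    have hsin0 : 0 ≤ Real.sin θ := Real.sin_nonneg_of_nonneg_of_le_pi (by linarith) (by linarith)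
    have hs := hsin θ hθ
    refine mul_le_mul' (ENNReal.ofReal_le_ofReal ?_)
      (hmono r hr ⟨hφ.1, by linarith⟩ ⟨by linarith, h2⟩ (by linarith))
    have e : c ^ (n - 1) * (r ^ (m + n - 1) * Real.cos (θ - π / 4) ^ (m - 1) *
        Real.sin (θ - π / 4) ^ (n - 1)) = r ^ (m + n - 1) * Real.cos (θ - π / 4) ^ (m - 1) *
        (c * Real.sin (θ - π / 4)) ^ (n - 1) := by
      rw [mul_pow]; ring
    rw [e]
    have hcos1 := hcos0.trans hcos
    gcongr
  · simp only [indicator_of_notMem hθ]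
    exact zero_le
end
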